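/- The number of pairs (A, B) of multi-indices A, B ∈ ℕ^6 with |A| = |B| = 5, A < B in lexicographic order, and (a₁−a₆)+(b₁−b₆) = (a₂−a₅)+(b₂−b₅) = (a₃−a₄)+(b₃−b₄) = 0, is exactly 330. -/

import Mathlib

/-- Base-6 encoding of a multi-index; on digits at most 5 it is strictly monotone for lex. -/
def encIdx (f : Fin 6 → ℕ) : ℕ :=
  ((((f 0 * 6 + f 1) * 6 + f 2) * 6 + f 3) * 6 + f 4) * 6 + f 5

/-- Boolean form of the condition on a pair. -/
def condIdx (f g : Fin 6 → ℕ) : Bool :=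
  Nat.beq (f 0 + g 0) (f 5 + g 5) && (Nat.beq (f 1 + g 1) (f 4 + g 4) &&
    (Nat.beq (f 2 + g 2) (f 3 + g 3) && Nat.blt (encIdx f) (encIdx g)))

theorem dig_lt (u v a b : ℕ) (ha : a ≤ 5) (hb : b ≤ 5) :
    u * 6 + a < v * 6 + b ↔ u < v ∨ (u = v ∧ a < b) := by omega

theorem dig_eq (u v a b : ℕ) (ha : a ≤ 5) (hb : b ≤ 5) :
    u * 6 + a = v * 6 + b ↔ u = v ∧ a = b := by omega

theorem lex_iff_enc (f g : Fin 6 → ℕ) (hf : ∑ i, f i = 5) (hg : ∑ i, g i = 5) :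
    toLex f < toLex g ↔ encIdx f < encIdx g := by
  have h : toLex f < toLex g ↔ ∃ i, (∀ j < i, f j = g j) ∧ f i < g i := Iff.rfl
  rw [h]
  simp only [Fin.sum_univ_six] at hf hg
  have e : (∃ i, (∀ j < i, f j = g j) ∧ f i < g i) ↔
      (f 0 < g 0 ∨ (f 0 = g 0 ∧ f 1 < g 1) ∨ (f 0 = g 0 ∧ f 1 = g 1 ∧ f 2 < g 2) ∨
      (f 0 = g 0 ∧ f 1 = g 1 ∧ f 2 = g 2 ∧ f 3 < g 3) ∨
      (f 0 = g 0 ∧ f 1 = g 1 ∧ f 2 = g 2 ∧ f 3 = g 3 ∧ f 4 < g 4) ∨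
      (f 0 = g 0 ∧ f 1 = g 1 ∧ f 2 = g 2 ∧ f 3 = g 3 ∧ f 4 = g 4 ∧ f 5 < g 5)) := by
    constructor
    · rintro ⟨i, hi, hlt⟩
      have h0 := hi 0
      have h1 := hi 1
      have h2 := hi 2
      have h3 := hi 3
      have h4 := hi 4
      fin_cases i <;> simp at h0 h1 h2 h3 h4 hlt <;> simp [*]
    · rintro (h | h | h | h | h | h)
      · exact ⟨0, by simp, h⟩
      · exact ⟨1, fun j hj => by fin_cases j <;> simp_all, by simp [h]⟩
      · exact ⟨2, fun j hj => by fin_cases j <;> simp_all, by simp [h]⟩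
      · exact ⟨3, fun j hj => by fin_cases j <;> simp_all, by simp [h]⟩
      · exact ⟨4, fun j hj => by fin_cases j <;> simp_all, by simp [h]⟩
      · exact ⟨5, fun j hj => by fin_cases j <;> simp_all, by simp [h]⟩
  rw [e]
  unfold encIdx
  rw [dig_lt _ _ _ _ (by omega) (by omega), dig_lt _ _ _ _ (by omega) (by omega),
    dig_lt _ _ _ _ (by omega) (by omega), dig_lt _ _ _ _ (by omega) (by omega),
    dig_lt _ _ _ _ (by omega) (by omega),
    dig_eq _ _ (f 4) (g 4) (by omega) (by omega), dig_eq _ _ (f 3) (g 3) (by omega) (by omega),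
    dig_eq _ _ (f 2) (g 2) (by omega) (by omega), dig_eq _ _ (f 1) (g 1) (by omega) (by omega)]
  clear hf hg h e
  tauto

theorem count_idx : ((List.Nat.antidiagonalTuple 6 5).map fun f =>
    (List.Nat.antidiagonalTuple 6 5).countP (condIdx f)).sum = 330 := by
  decide +kernel

/-- The number of pairs `(A,B)` of multi-indices in `ℕ⁶` with `|A| = |B| = 5`,
`A < B` lexicographically, and total torus weight zero, i.e.
`(a₁−a₆)+(b₁−b₆) = (a₂−a₅)+(b₂−b₅) = (a₃−a₄)+(b₃−b₄) = 0`, is exactly 330. -/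
theorem weight_zero_pairs_count :
    Nat.card {p : (Fin 6 → ℕ) × (Fin 6 → ℕ) //
      (∑ i, p.1 i) = 5 ∧ (∑ i, p.2 i) = 5 ∧ toLex p.1 < toLex p.2 ∧
      ((p.1 0 : ℤ) - p.1 5) + ((p.2 0 : ℤ) - p.2 5) = 0 ∧
      ((p.1 1 : ℤ) - p.1 4) + ((p.2 1 : ℤ) - p.2 4) = 0 ∧
      ((p.1 2 : ℤ) - p.1 3) + ((p.2 2 : ℤ) - p.2 3) = 0} = 330 := by
  have key : ∀ p : (Fin 6 → ℕ) × (Fin 6 → ℕ),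
      ((∑ i, p.1 i) = 5 ∧ (∑ i, p.2 i) = 5 ∧ toLex p.1 < toLex p.2 ∧
      ((p.1 0 : ℤ) - p.1 5) + ((p.2 0 : ℤ) - p.2 5) = 0 ∧
      ((p.1 1 : ℤ) - p.1 4) + ((p.2 1 : ℤ) - p.2 4) = 0 ∧
      ((p.1 2 : ℤ) - p.1 3) + ((p.2 2 : ℤ) - p.2 3) = 0) ↔
      p ∈ ((Finset.Nat.antidiagonalTuple 6 5).sigma (fun f =>
        (Finset.Nat.antidiagonalTuple 6 5).filter (fun g => condIdx f g = true))).map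
        (Equiv.sigmaEquivProd _ _).toEmbedding := by
    rintro ⟨f, g⟩
    simp only [Finset.mem_map_equiv, Finset.mem_sigma, Finset.mem_filter,
      Finset.Nat.mem_antidiagonalTuple, Equiv.sigmaEquivProd_symm_apply]
    constructor
    · rintro ⟨hf, hg, hl, h0, h1, h2⟩
      rw [lex_iff_enc f g hf hg] at hl
      refine ⟨hf, hg, ?_⟩
      simp only [condIdx, Bool.and_eq_true, Nat.beq_eq, Nat.blt_eq]
      omega
    · rintro ⟨hf, hg, h⟩
      simp only [condIdx, Bool.and_eq_true, Nat.beq_eq, Nat.blt_eq] at h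
      rw [lex_iff_enc f g hf hg]
      omega
  rw [Nat.card_congr (Equiv.subtypeEquivRight key), Nat.card_eq_fintype_card, Fintype.card_coe,
    Finset.card_map, Finset.card_sigma, ← count_idx]
  have h2 : ∀ f, ((Finset.Nat.antidiagonalTuple 6 5).filter
      (fun g => condIdx f g = true)).card =
      (List.Nat.antidiagonalTuple 6 5).countP (condIdx f) := by
    intro f
    rw [List.countP_eq_length_filter]
    simp only [Finset.card, Finset.filter, Finset.Nat.antidiagonalTuple,
      Multiset.Nat.antidiagonalTuple, Multiset.filter_coe, Multiset.coe_card, Bool.decide_eq_true]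
  simp only [h2]
  rfl
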